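/- Let R be a Noetherian local ring and let I and J be ideals of R such that R/I, R/J, R/(I ∩ J) and R/(I + J) are all nonzero. Then depth R/(I ∩ J) ≥ min{depth R/I, depth R/J, depth R/(I + J) + 1}. -/

import Mathlib

/-!
Fix `k = R/𝔪`. By the Rees theorem, a nonzero finitely generated module `M` has an `M`-regular
sequence of length `n` in `𝔪` if and only if `Ext^i(k, M) = 0` for all `i < n`. Lengths of regular
sequences are bounded by the (finite) dimension of the support of `M`, so the supremum defining
`moduleDepth` is attained, and `n ≤ depth M` is equivalent to this vanishing
(`le_moduleDepth_iff`). The inequality is then read off from the long exact sequence of `Ext(k, -)`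
attached to `0 → R/(I ∩ J) → R/I × R/J → R/(I + J) → 0`: if `i` is smaller than the
minimum on the right-hand side, then `Ext^i(k, R/I × R/J) = 0` and `Ext^(i-1)(k, R/(I + J)) = 0`,
which forces `Ext^i(k, R/(I ∩ J)) = 0`.
-/

/-- The depth of a module `M` over a Noetherian local ring `R`: the supremum of
the lengths of `M`-regular sequences contained in the maximal ideal of `R`
(for a nonzero finitely generated module this is the length of any maximal
`M`-regular sequence in the maximal ideal). -/
noncomputable def moduleDepth (R M : Type*) [CommRing R] [IsLocalRing R]
    [AddCommGroup M] [Module R M] : ℕ :=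
  sSup {n : ℕ | ∃ rs : List R, rs.length = n ∧
    (∀ r ∈ rs, r ∈ IsLocalRing.maximalIdeal R) ∧ RingTheory.Sequence.IsRegular M rs}

open CategoryTheory CategoryTheory.Abelian IsLocalRing

universe u

/-- The residue field `R/𝔪` as an object of `ModuleCat R`, in the form (with a `Shrink`) in which
it occurs in the Rees theorem of Mathlib. -/
noncomputable abbrev residueModule (R : Type u) [CommRing R] [IsLocalRing R] : ModuleCat.{u} R :=
  ModuleCat.of R (Shrink.{u} (R ⧸ maximalIdeal R))

section Depth

variable (R : Type u) [CommRing R] [IsLocalRing R] [IsNoetherianRing R]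
  (M : Type u) [AddCommGroup M] [Module R M] [Module.Finite R M]

/-- Without this bound the natural-number supremum in `moduleDepth` would be the junk value `0`. -/
lemma bddAbove_length_isRegular [Nontrivial M] :
    BddAbove {n : ℕ | ∃ rs : List R, rs.length = n ∧
      (∀ r ∈ rs, r ∈ maximalIdeal R) ∧ RingTheory.Sequence.IsRegular M rs} := by
  obtain ⟨d, hd⟩ := WithBot.ne_bot_iff_exists.mp (ringKrullDim_ne_bot (R := R))
  have hd_top : d ≠ ⊤ := by
    rintro rfl
    exact ringKrullDim_ne_top (R := R) hd.symm
  lift d to ℕ using hd_top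
  refine ⟨d, ?_⟩
  rintro _ ⟨rs, rfl, -, reg⟩
  have h := Module.supportDim_add_length_eq_supportDim_of_isRegular rs reg
  have := Submodule.Quotient.nontrivial_iff.mpr reg.top_ne_smul.symm
  obtain ⟨e, he⟩ := WithBot.ne_bot_iff_exists.mp (Module.supportDim_ne_bot_of_nontrivial R
    (M ⧸ Ideal.ofList rs • (⊤ : Submodule R M)))
  have hle := h.trans_le (Module.supportDim_le_ringKrullDim R M)
  rw [← he, ← hd] at hle
  have hlen : e + (rs.length : ℕ∞) ≤ d := by exact_mod_cast hle
  exact_mod_cast le_add_self.trans hlen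

/-- Depth is detected by the vanishing of `Ext(R/𝔪, -)`. -/
lemma le_moduleDepth_iff [Nontrivial M] (n : ℕ) :
    n ≤ moduleDepth R M ↔
      ∀ i < n, Subsingleton (Ext (residueModule R) (ModuleCat.of R M) i) := by
  -- By the Nakayama lemma, `𝔪 M ≠ M`.
  have lt : maximalIdeal R • (⊤ : Submodule R M) < ⊤ := by
    refine lt_top_iff_ne_top.mpr fun h ↦ top_ne_bot (α := Submodule R M) ?_
    exact Submodule.eq_bot_of_le_smul_of_le_jacobson_bot _ _ Module.Finite.fg_top h.ge
      (maximalIdeal_le_jacobson _)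
  have rees (m : ℕ) := (ModuleCat.exists_isRegular_tfae (maximalIdeal R) m
    (ModuleCat.of R M) lt).out 1 3
  refine ⟨fun hn i hi ↦ ?_, fun h ↦ le_csSup (bddAbove_length_isRegular R M) ((rees n).mp h)⟩
  have mem := Nat.sSup_mem ⟨0, (rees 0).mp (by simp)⟩ (bddAbove_length_isRegular R M)
  exact (rees _).mpr mem i (hi.trans_le hn)

end Depth

section ShortExact

variable {R : Type u} [CommRing R] {S : ShortComplex (ModuleCat.{u} R)}

lemma subsingleton_ext_middle (hS : S.ShortExact) (N : ModuleCat.{u} R) (i : ℕ)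
    (h₁ : Subsingleton (Ext N S.X₁ i))
    (h₃ : Subsingleton (Ext N S.X₃ i)) : Subsingleton (Ext N S.X₂ i) := by
  refine subsingleton_of_forall_eq 0 fun x ↦ ?_
  obtain ⟨y, rfl⟩ := Ext.covariant_sequence_exact₂ N hS x (Subsingleton.elim _ _)
  rw [Subsingleton.elim y 0, Ext.zero_comp]

lemma subsingleton_ext_left (hS : S.ShortExact) (N : ModuleCat.{u} R) (i : ℕ)
    (h₂ : Subsingleton (Ext N S.X₂ i))
    (h₃ : ∀ j, j + 1 = i → Subsingleton (Ext N S.X₃ j)) : Subsingleton (Ext N S.X₁ i) := by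
  refine subsingleton_of_forall_eq 0 fun x ↦ ?_
  cases i with
  | zero =>
    have := hS.mono_f
    exact Ext.postcomp_mk₀_injective_of_mono N S.f (Subsingleton.elim _ _)
  | succ j =>
    have := h₃ j rfl
    obtain ⟨y, rfl⟩ := Ext.covariant_sequence_exact₁ N hS x (Subsingleton.elim _ _) rfl
    rw [Subsingleton.elim y 0, Ext.zero_comp]

end ShortExact

section Linear

variable {R : Type u} [CommRing R] (N : ModuleCat.{u} R)

/-- A short exact sequence of modules, as a short exact sequence in `ModuleCat R`. -/
lemma shortExact_of_linearMap {A B C : Type u} [AddCommGroup A] [Module R A] [AddCommGroup B]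
    [Module R B] [AddCommGroup C] [Module R C] (f : A →ₗ[R] B) (g : B →ₗ[R] C)
    (hf : Function.Injective f) (hfg : Function.Exact f g) (hg : Function.Surjective g) :
    (ShortComplex.mk (ModuleCat.ofHom f) (ModuleCat.ofHom g)
      (by ext x; exact hfg.apply_apply_eq_zero x)).ShortExact where
  exact := (ShortComplex.ShortExact.moduleCat_exact_iff_function_exact _).mpr hfg
  mono_f := (ModuleCat.mono_iff_injective _).mpr hf
  epi_g := (ModuleCat.epi_iff_surjective _).mpr hg

lemma subsingleton_ext_prod (A B : Type u) [AddCommGroup A] [Module R A] [AddCommGroup B]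
    [Module R B] (i : ℕ) (hA : Subsingleton (Ext N (ModuleCat.of R A) i))
    (hB : Subsingleton (Ext N (ModuleCat.of R B) i)) :
    Subsingleton (Ext N (ModuleCat.of R (A × B)) i) :=
  subsingleton_ext_middle (shortExact_of_linearMap (LinearMap.inl R A B) (LinearMap.snd R A B)
    LinearMap.inl_injective Function.Exact.inl_snd LinearMap.snd_surjective) N i hA hB

/-- The `Ext` comparison given by `0 → R/(I ∩ J) → R/I × R/J → R/(I + J) → 0`. -/
lemma subsingleton_ext_quotient_inf (I J : Ideal R) (i : ℕ)
    (hI : Subsingleton (Ext N (ModuleCat.of R (R ⧸ I)) i))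
    (hJ : Subsingleton (Ext N (ModuleCat.of R (R ⧸ J)) i))
    (h : ∀ j, j + 1 = i → Subsingleton (Ext N (ModuleCat.of R (R ⧸ (I + J))) j)) :
    Subsingleton (Ext N (ModuleCat.of R (R ⧸ (I ⊓ J))) i) := by
  let f : (R ⧸ (I ⊓ J)) →ₗ[R] (R ⧸ I) × (R ⧸ J) :=
    (Submodule.factor inf_le_left).prod (Submodule.factor inf_le_right)
  let g : (R ⧸ I) × (R ⧸ J) →ₗ[R] R ⧸ (I + J) :=
    (Submodule.factor (le_sup_left : I ≤ I ⊔ J)).coprod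
      (-(Submodule.factor (le_sup_right : J ≤ I ⊔ J)))
  have hf : Function.Injective f := by
    rw [injective_iff_map_eq_zero]
    intro x hx
    obtain ⟨x, rfl⟩ := Ideal.Quotient.mk_surjective x
    obtain ⟨h1, h2⟩ := Prod.ext_iff.mp hx
    exact Ideal.Quotient.eq_zero_iff_mem.mpr
      ⟨Ideal.Quotient.eq_zero_iff_mem.mp h1, Ideal.Quotient.eq_zero_iff_mem.mp h2⟩
  have hg : Function.Surjective g := by
    intro x
    obtain ⟨x, rfl⟩ := Ideal.Quotient.mk_surjective x
    refine ⟨(Ideal.Quotient.mk I x, 0), ?_⟩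
    simp only [g, LinearMap.coprod_apply, map_zero, add_zero]
    rfl
  have hfg : Function.Exact f g := by
    rintro ⟨a, b⟩
    obtain ⟨a, rfl⟩ := Ideal.Quotient.mk_surjective a
    obtain ⟨b, rfl⟩ := Ideal.Quotient.mk_surjective b
    have hg' : g (Ideal.Quotient.mk I a, Ideal.Quotient.mk J b) =
        Ideal.Quotient.mk (I + J) (a - b) := by
      rw [sub_eq_add_neg]; rfl
    rw [hg', Ideal.Quotient.eq_zero_iff_mem]
    constructor
    · intro hab
      obtain ⟨x, hx, y, hy, hxy⟩ := Submodule.mem_sup.mp hab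
      -- `a - b = x + y` with `x ∈ I`, `y ∈ J`, so `a - x = b + y` lifts both classes.
      refine ⟨Ideal.Quotient.mk _ (a - x), Prod.ext ?_ ?_⟩
      · exact Ideal.Quotient.eq.mpr (by simpa using hx)
      · refine Ideal.Quotient.eq.mpr ?_
        change a - x - b ∈ J
        rwa [show a - x - b = y by linear_combination -hxy]
    · rintro ⟨x, hx⟩
      obtain ⟨x, rfl⟩ := Ideal.Quotient.mk_surjective x
      obtain ⟨h1, h2⟩ := Prod.ext_iff.mp hx
      have h1 : x - a ∈ I := Ideal.Quotient.eq.mp h1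
      have h2 : x - b ∈ J := Ideal.Quotient.eq.mp h2
      exact Submodule.mem_sup.mpr ⟨-(x - a), I.neg_mem h1, x - b, h2, by ring⟩
  exact subsingleton_ext_left (shortExact_of_linearMap f g hf hfg hg) N i
    (subsingleton_ext_prod N _ _ i hI hJ) h

end Linear

/-- For ideals `I`, `J` of a Noetherian local ring `R` with `R/I`, `R/J`,
`R/(I ∩ J)` and `R/(I + J)` all nonzero,
`depth R/(I ∩ J) ≥ min {depth R/I, depth R/J, depth R/(I + J) + 1}`. -/
theorem depth_quotient_inf (R : Type*) [CommRing R] [IsLocalRing R] [IsNoetherianRing R]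
    (I J : Ideal R)
    [Nontrivial (R ⧸ I)] [Nontrivial (R ⧸ J)]
    [Nontrivial (R ⧸ (I ⊓ J))] [Nontrivial (R ⧸ (I + J))] :
    moduleDepth R (R ⧸ (I ⊓ J)) ≥
      min (min (moduleDepth R (R ⧸ I)) (moduleDepth R (R ⧸ J)))
        (moduleDepth R (R ⧸ (I + J)) + 1) := by
  refine (le_moduleDepth_iff R (R ⧸ (I ⊓ J)) _).mpr fun i hi ↦ ?_
  obtain ⟨⟨hI, hJ⟩, hK⟩ : (i < moduleDepth R (R ⧸ I) ∧ i < moduleDepth R (R ⧸ J)) ∧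
      i < moduleDepth R (R ⧸ (I + J)) + 1 := by
    simpa only [lt_min_iff] using hi
  exact subsingleton_ext_quotient_inf _ I J i
    ((le_moduleDepth_iff R (R ⧸ I) _).mp le_rfl i hI)
    ((le_moduleDepth_iff R (R ⧸ J) _).mp le_rfl i hJ)
    fun j hj ↦ (le_moduleDepth_iff R (R ⧸ (I + J)) _).mp le_rfl j (by omega)
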